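/- For every finite graph G and every tree decomposition (T,β) of G, there exists a rooted compact tree decomposition (T̂,β̂) of G such that every bag of (T̂,β̂) is a subset of some bag of (T,β) and every adhesion of (T̂,β̂) is a subset of some adhesion of (T,β). -/

import Mathlib

/-- An (unrooted) tree decomposition of `G`: a tree `T` together with bags `β` such
that bags cover all vertices and all edges, and for every vertex `v` the set of
nodes whose bag contains `v` is connected in `T` (witnessed by a walk all of whose
vertices carry `v` in their bags). -/
structure IsTreeDecomp {V ι : Type} (G : SimpleGraph V) (T : SimpleGraph ι)
    (β : ι → Set V) : Prop where
  isTree : T.IsTree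
  exists_bag : ∀ v : V, ∃ t : ι, v ∈ β t
  adj_bag : ∀ u v : V, G.Adj u v → ∃ t : ι, u ∈ β t ∧ v ∈ β t
  bag_connected : ∀ (v : V) (t₁ t₂ : ι), v ∈ β t₁ → v ∈ β t₂ →
    ∃ p : T.Walk t₁ t₂, ∀ s ∈ p.support, v ∈ β s

/-- `s` is an ancestor of `t` (possibly `s = t`) with respect to the parent map. -/
def IsAncestor {ι : Type} (parent : ι → ι) (s t : ι) : Prop :=
  ∃ n : ℕ, parent^[n] t = s

/-- `s` lies on the (unique) path between `t₁` and `t₂` in the rooted tree given by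
`parent`. -/
def OnTreePath {ι : Type} (parent : ι → ι) (s t₁ t₂ : ι) : Prop :=
  (IsAncestor parent s t₁ ∨ IsAncestor parent s t₂) ∧
    ∀ u : ι, IsAncestor parent u t₁ → IsAncestor parent u t₂ → IsAncestor parent u s

/-- A rooted tree decomposition of `G`. -/
structure IsRootedTreeDecomp {V ι : Type} (G : SimpleGraph V) (root : ι)
    (parent : ι → ι) (β : ι → Set V) : Prop where
  parent_root : parent root = root
  reaches_root : ∀ t : ι, ∃ n : ℕ, parent^[n] t = root
  exists_bag : ∀ v : V, ∃ t : ι, v ∈ β t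
  adj_bag : ∀ u v : V, G.Adj u v → ∃ t : ι, u ∈ β t ∧ v ∈ β t
  bag_connected : ∀ (v : V) (t₁ t₂ s : ι), v ∈ β t₁ → v ∈ β t₂ →
    OnTreePath parent s t₁ t₂ → v ∈ β s

/-- The (open) neighborhood of a vertex set `X` in `G`. -/
def nbhd {V : Type} (G : SimpleGraph V) (X : Set V) : Set V :=
  {v | v ∉ X ∧ ∃ u ∈ X, G.Adj u v}

/-- `γ(t)`: union of the bags of `t` and all its descendants. -/
def gammaSet {V ι : Type} (parent : ι → ι) (β : ι → Set V) (t : ι) : Set V :=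
  {v | ∃ s : ι, IsAncestor parent t s ∧ v ∈ β s}

/-- `α(t) = γ(t) \ σ(t)`. -/
def alphaSet {V ι : Type} (parent : ι → ι) (β : ι → Set V) (t : ι) : Set V :=
  gammaSet parent β t \ (β t ∩ β (parent t))

/-- Compactness of a rooted tree decomposition: for every non-root node `t`,
`G[α(t)]` is connected and `N_G(α(t)) = σ(t)`. -/
def IsCompactRTD {V ι : Type} (G : SimpleGraph V) (root : ι) (parent : ι → ι)
    (β : ι → Set V) : Prop :=
  ∀ t : ι, t ≠ root → (G.induce (alphaSet parent β t)).Connected ∧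
    nbhd G (alphaSet parent β t) = β t ∩ β (parent t)

namespace CompactifAux

theorem anc_refl {ι : Type} (p : ι → ι) (t : ι) : IsAncestor p t t := ⟨0, rfl⟩

theorem anc_par {ι : Type} (p : ι → ι) (t : ι) : IsAncestor p (p t) t := ⟨1, rfl⟩

theorem anc_trans {ι : Type} {p : ι → ι} {a b c : ι} (h1 : IsAncestor p a b)
    (h2 : IsAncestor p b c) : IsAncestor p a c := by
  obtain ⟨n, hn⟩ := h1
  obtain ⟨m, hm⟩ := h2
  exact ⟨n + m, by rw [Function.iterate_add_apply, hm, hn]⟩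

theorem anc_cases {ι : Type} {p : ι → ι} {a b : ι} (h1 : IsAncestor p a b) :
    b = a ∨ IsAncestor p a (p b) := by
  obtain ⟨n, hn⟩ := h1
  cases n with
  | zero => exact Or.inl hn
  | succ n => exact Or.inr ⟨n, by rwa [Function.iterate_succ_apply] at hn⟩

theorem anc_total {ι : Type} {p : ι → ι} {a b c : ι} (h1 : IsAncestor p a c)
    (h2 : IsAncestor p b c) : IsAncestor p a b ∨ IsAncestor p b a := by
  obtain ⟨n, hn⟩ := h1
  obtain ⟨m, hm⟩ := h2
  rcases le_total n m with h | h
  · right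
    obtain ⟨k, rfl⟩ := Nat.exists_eq_add_of_le h
    refine ⟨k, ?_⟩
    rw [← hn, ← hm, ← Function.iterate_add_apply, add_comm]
  · left
    obtain ⟨k, rfl⟩ := Nat.exists_eq_add_of_le h
    refine ⟨k, ?_⟩
    rw [← hn, ← hm, ← Function.iterate_add_apply, add_comm]

theorem anc_antisymm {ι : Type} {p : ι → ι} {r : ι} (hr : p r = r)
    (hreach : ∀ t, ∃ n : ℕ, p^[n] t = r) {a b : ι} (h1 : IsAncestor p a b)
    (h2 : IsAncestor p b a) : a = b := by
  have hfix : ∀ n, p^[n] r = r := fun n => Function.iterate_fixed hr n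
  obtain ⟨n, hn⟩ := h1
  obtain ⟨m, hm⟩ := h2
  rcases Nat.eq_zero_or_pos n with h0 | h0
  · subst h0; exact hn.symm
  have hk : p^[n + m] a = a := by rw [Function.iterate_add_apply, hm, hn]
  obtain ⟨N, hN⟩ := hreach a
  have hk2 : p^[(n + m) * N] a = a := by
    rw [Function.iterate_mul]; exact Function.iterate_fixed hk N
  have hle : N ≤ (n + m) * N := Nat.le_mul_of_pos_left _ (by omega)
  obtain ⟨k, hk'⟩ := Nat.exists_eq_add_of_le hle
  rw [hk', add_comm, Function.iterate_add_apply, hN, hfix] at hk2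
  rw [← hm, ← hk2, hfix]

/-- if `v` propagates upwards until `top`, path-connectedness holds. -/
theorem conn_of_top {V κ : Type} {q : κ → κ} {R : κ} {β : κ → Set V} (hR : q R = R)
    (hreach : ∀ t, ∃ n : ℕ, q^[n] t = R) {v : V} {top : κ}
    (htop : ∀ x, v ∈ β x → x = top ∨ (x ≠ R ∧ v ∈ β (q x))) :
    (∀ x, v ∈ β x → IsAncestor q top x ) ∧
    ∀ x s, v ∈ β x → IsAncestor q s x → IsAncestor q top s → v ∈ β s := by
  constructor
  · intro x hx
    obtain ⟨n, hn⟩ := hreach x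
    induction n generalizing x with
    | zero =>
      have hx' : x = R := hn
      subst hx'
      rcases htop _ hx with h | ⟨h, _⟩
      · exact h ▸ anc_refl _ _
      · exact absurd rfl h
    | succ n ih =>
      rcases htop _ hx with h | ⟨-, h⟩
      · exact h ▸ anc_refl _ _
      · exact anc_trans (ih _ h hn) (anc_par _ _)
  · rintro x s hx ⟨n, hn⟩ hs
    induction n generalizing x with
    | zero => exact (show x = s from hn) ▸ hx
    | succ n ih =>
      rcases htop _ hx with h | ⟨-, h⟩
      · subst h
        have : s = x := anc_antisymm hR hreach ⟨n+1, hn⟩ hs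
        exact this ▸ hx
      · exact ih _ h hn


theorem rooting {ι : Type} {T : SimpleGraph ι} (hT : T.IsTree) :
    ∃ (r : ι) (p : ι → ι), p r = r ∧ (∀ t, ∃ n : ℕ, p^[n] t = r) ∧
      (∀ t, t ≠ r → T.Adj t (p t)) ∧ ∀ x y, T.Adj x y → y = p x ∨ x = p y := by
  classical
  obtain ⟨r⟩ := hT.connected.nonempty
  have hex : ∀ t, ∃ s, (t = r → s = r) ∧ (t ≠ r → T.Adj t s ∧ T.dist s r + 1 = T.dist t r) := by
    intro t
    by_cases h : t = r
    · exact ⟨r, fun _ => rfl, fun h' => absurd h h'⟩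
    · obtain ⟨w, hw⟩ := hT.connected.exists_walk_length_eq_dist t r
      cases w with
      | nil => exact absurd rfl h
      | @cons _ s _ hadj w =>
        refine ⟨s, fun h' => absurd h' h, fun _ => ⟨hadj, ?_⟩⟩
        have h1 : T.dist s r ≤ w.length := SimpleGraph.dist_le w
        have h2 := hT.dist_eq_dist_add_one_of_adj r hadj
        rw [T.dist_comm (u := r), T.dist_comm (u := r)] at h2
        simp only [SimpleGraph.Walk.length_cons] at hw
        omega
  choose p hp1 hp2 using hex
  have huniq : ∀ x y, T.Adj x y → T.dist y r + 1 = T.dist x r → y = p x := by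
    intro x y hxy hd
    have hxr : x ≠ r := by
      rintro rfl
      simp at hd
    obtain ⟨ha, hb⟩ := hp2 x hxr
    obtain ⟨w1, hw1⟩ := hT.connected.exists_walk_length_eq_dist y r
    obtain ⟨w2, hw2⟩ := hT.connected.exists_walk_length_eq_dist (p x) r
    have e1 : (SimpleGraph.Walk.cons hxy w1).IsPath :=
      SimpleGraph.Walk.isPath_of_length_eq_dist _ (by simp; omega)
    have e2 : (SimpleGraph.Walk.cons ha w2).IsPath :=
      SimpleGraph.Walk.isPath_of_length_eq_dist _ (by simp; omega)
    have := (hT.existsUnique_path x r).unique e1 e2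
    have h3 := congrArg SimpleGraph.Walk.snd this
    simpa using h3
  refine ⟨r, p, hp1 r rfl, ?_, fun t ht => (hp2 t ht).1, ?_⟩
  · intro t
    generalize hn : T.dist t r = n
    induction n generalizing t with
    | zero =>
      exact ⟨0, (hT.connected.dist_eq_zero_iff).1 hn⟩
    | succ n ih =>
      have : t ≠ r := by rintro rfl; simp at hn
      obtain ⟨m, hm⟩ := ih (p t) (by have := (hp2 t this).2; omega)
      exact ⟨m + 1, hm⟩
  · intro x y hxy
    have h2 := hT.dist_eq_dist_add_one_of_adj r hxy
    rw [T.dist_comm (u := r), T.dist_comm (u := r)] at h2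
    rcases h2 with h | h
    · exact Or.inl (huniq x y hxy h.symm)
    · exact Or.inr (huniq y x hxy.symm h.symm)

theorem exists_top {V ι : Type} {G : SimpleGraph V} {T : SimpleGraph ι} {β : ι → Set V}
    (hdec : IsTreeDecomp G T β) {r : ι} {p : ι → ι} (hr : p r = r)
    (hreach : ∀ t, ∃ n : ℕ, p^[n] t = r)
    (hadj : ∀ x y, T.Adj x y → y = p x ∨ x = p y) (v : V) :
    ∃ top, v ∈ β top ∧ ∀ x, v ∈ β x → x = top ∨ (x ≠ r ∧ v ∈ β (p x)) := by
  have key : ∀ t x (w : T.Walk x t), (∀ s ∈ w.support, v ∈ β s) → (t = r ∨ v ∉ β (p t)) →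
      IsAncestor p t x := by
    intro t x w
    induction w with
    | nil => intro _ _; exact anc_refl _ _
    | @cons x y t hxy w ih =>
      intro hs ht
      have hy := ih (fun s hs' => hs s (by simp [hs'])) ht
      have hx : v ∈ β x := hs x (by simp)
      rcases ht with rfl | ht
      · exact hreach x
      rcases hadj x y hxy with h | h
      · exact anc_trans hy (h ▸ anc_par p x)
      · rcases anc_cases hy with h' | h'
        · subst h'; rw [h] at hx; exact absurd hx ht
        · exact h ▸ h'
  obtain ⟨t0, ht0⟩ := hdec.exists_bag v
  have hex : ∃ top, v ∈ β top ∧ (top = r ∨ v ∉ β (p top)) := by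
    obtain ⟨n, hn⟩ := hreach t0
    induction n generalizing t0 with
    | zero => exact ⟨t0, ht0, Or.inl hn⟩
    | succ n ih =>
      by_cases h : v ∈ β (p t0)
      · exact ih _ h hn
      · exact ⟨t0, ht0, Or.inr h⟩
  obtain ⟨top, h1, h2⟩ := hex
  refine ⟨top, h1, fun x hx => ?_⟩
  by_contra! hcon
  obtain ⟨hne, hcon⟩ := hcon
  have hx2 : x = r ∨ v ∉ β (p x) := by
    by_cases h : x = r
    · exact Or.inl h
    · exact Or.inr (hcon h)
  obtain ⟨w, hw⟩ := hdec.bag_connected v x top hx h1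
  obtain ⟨w', hw'⟩ := hdec.bag_connected v top x h1 hx
  exact hne (anc_antisymm hr hreach (key _ _ w' hw' hx2) (key _ _ w hw h2))

/-- `C` is a connected component of `G[A]`. -/
def IsComp {V : Type} (G : SimpleGraph V) (A C : Set V) : Prop :=
  C ⊆ A ∧ (G.induce C).Connected ∧ ∀ u ∈ C, ∀ w ∈ A, G.Adj u w → w ∈ C

theorem exists_comp {V : Type} [Finite V] (G : SimpleGraph V) (A : Set V) {v : V} (hv : v ∈ A) :
    ∃ C, IsComp G A C ∧ v ∈ C := by
  classical
  let S : Set (Set V) := {C | C ⊆ A ∧ (G.induce C).Connected ∧ v ∈ C}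
  have hS : S.Finite := Set.toFinite _
  have hne : S.Nonempty := ⟨{v}, by simpa using hv, by
    haveI : Nonempty ({v} : Set V) := ⟨⟨v, rfl⟩⟩
    haveI : Subsingleton ({v} : Set V) := inferInstance
    exact ⟨SimpleGraph.Preconnected.of_subsingleton⟩, rfl⟩
  obtain ⟨C, hC⟩ := hS.exists_maximal hne
  obtain ⟨⟨h1, h2, h3⟩, hmax⟩ := hC
  refine ⟨C, ⟨h1, h2, ?_⟩, h3⟩
  intro u hu w hw huw
  have hc : (G.induce (C ∪ {u, w})).Connected :=
    SimpleGraph.induce_union_connected h2.preconnected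
      (SimpleGraph.induce_pair_connected_of_adj huw).preconnected ⟨u, hu, by simp⟩
  have hm : C ∪ {u, w} ∈ S := by
    refine ⟨?_, hc, Or.inl h3⟩
    rintro x (hx | hx | hx)
    · exact h1 hx
    · exact hx ▸ h1 hu
    · exact (show x = w from hx) ▸ hw
  exact hmax hm (fun x hx => Or.inl hx) (Or.inr (by simp))

theorem comp_sub {V : Type} {G : SimpleGraph V} {A C D : Set V} (hD : IsComp G A D)
    (hCA : C ⊆ A) (hC : (G.induce C).Connected) {v : V} (hv : v ∈ C) (hvD : v ∈ D) : C ⊆ D := by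
  intro w hw
  obtain ⟨q⟩ := hC.preconnected ⟨v, hv⟩ ⟨w, hw⟩
  have : ∀ (a b : C) (q : (G.induce C).Walk a b), a.1 ∈ D → b.1 ∈ D := by
    intro a b q
    induction q with
    | nil => exact id
    | @cons a b c h q ih =>
      intro ha
      exact ih (hD.2.2 a.1 ha b.1 (hCA b.2) h)
  exact this _ _ q hvD

/-- closed neighbourhood -/
def NC {V : Type} (G : SimpleGraph V) (C : Set V) : Set V := {v | v ∈ C ∨ ∃ u ∈ C, G.Adj u v}

theorem NC_mono {V : Type} {G : SimpleGraph V} {C D : Set V} (h : C ⊆ D) : NC G C ⊆ NC G D := by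
  rintro v (hv | ⟨u, hu, huv⟩)
  · exact Or.inl (h hv)
  · exact Or.inr ⟨u, h hu, huv⟩

end CompactifAux

open CompactifAux

/-- compactification: given any tree decomposition `(T,β)` of a finite
graph `G`, there is a rooted compact tree decomposition of `G` whose every bag is a
subset of some bag of `(T,β)` and whose every adhesion is a subset of some adhesion
of `(T,β)`. -/
theorem exists_compactification
    (V ι : Type) [Fintype V] [Fintype ι] (G : SimpleGraph V)
    (T : SimpleGraph ι) (β : ι → Set V) (hdec : IsTreeDecomp G T β) :
    ∃ (κ : Type) (_ : Fintype κ) (root : κ) (parent : κ → κ) (β' : κ → Set V),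
      IsRootedTreeDecomp G root parent β' ∧
      IsCompactRTD G root parent β' ∧
      (∀ t : κ, ∃ s : ι, β' t ⊆ β s) ∧
      (∀ t : κ, t ≠ root → ∃ s₁ s₂ : ι, T.Adj s₁ s₂ ∧
        β' t ∩ β' (parent t) ⊆ β s₁ ∩ β s₂) := by
  classical
  obtain ⟨r, p, hr, hreach, hTadj, hadj⟩ := rooting hdec.isTree
  choose τ hτ htop using exists_top hdec hr hreach hadj
  have hτanc : ∀ v x, v ∈ β x → IsAncestor p (τ v) x := fun v =>
    (conn_of_top (top := τ v) hr hreach (htop v)).1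
  have hτmid : ∀ v x s, v ∈ β x → IsAncestor p s x → IsAncestor p (τ v) s → v ∈ β s := fun v =>
    (conn_of_top (top := τ v) hr hreach (htop v)).2
  let A : ι → Set V := fun t => {v | IsAncestor p t (τ v)}
  have hA : ∀ t, A t ⊆ A (p t) := fun t v hv => anc_trans (anc_par p t) hv
  -- vertices of `A t` are not in the parent bag
  have hAp : ∀ t, t ≠ r → ∀ v ∈ A t, v ∉ β (p t) := by
    intro t ht v hv hvp
    have h1 : IsAncestor p t (p t) := anc_trans hv (hτanc v _ hvp)
    have h2 : t = p t := anc_antisymm hr hreach h1 (anc_par p t)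
    have h3 := hTadj t ht
    rw [← h2] at h3
    exact h3.ne rfl
  -- neighbours of `A t` outside of `A t` are in the adhesion
  have hAn : ∀ t, ∀ u ∈ A t, ∀ w, w ∉ A t → G.Adj u w → w ∈ β t ∧ w ∈ β (p t) := by
    intro t u hu w hw huw
    obtain ⟨s, hus, hws⟩ := hdec.adj_bag u w huw
    have hts : IsAncestor p t s := anc_trans hu (hτanc u s hus)
    have hws' := hτanc w s hws
    have hwt : IsAncestor p (τ w) t := (anc_total hws' hts).resolve_right hw
    have hwb : w ∈ β t := hτmid w s t hws hts hwt
    refine ⟨hwb, ?_⟩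
    rcases htop w t hwb with h | h
    · exact absurd (show w ∈ A t from h ▸ anc_refl p t) hw
    · exact h.2
  let κ : Type := {x : ι × Set V // (x.1 = r ∧ x.2 = Set.univ) ∨ (x.1 ≠ r ∧ IsComp G (A x.1) x.2)}
  have hκ : ∀ t v, v ∈ A t → ∃ x : κ, x.1.1 = t ∧ v ∈ x.1.2 := by
    intro t v hv
    by_cases h : t = r
    · exact ⟨⟨(r, Set.univ), Or.inl ⟨rfl, rfl⟩⟩, h.symm, trivial⟩
    · obtain ⟨C, hC, hvC⟩ := exists_comp G (A t) hv
      exact ⟨⟨(t, C), Or.inr ⟨h, hC⟩⟩, rfl, hvC⟩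
  let R : κ := ⟨(r, Set.univ), Or.inl ⟨rfl, rfl⟩⟩
  have hRuniq : ∀ x : κ, x.1.1 = r → x = R := by
    intro x hx
    rcases x.2 with h | h
    · exact Subtype.ext (Prod.ext h.1 h.2)
    · exact absurd hx h.1
  have hcomp : ∀ x : κ, x ≠ R → x.1.1 ≠ r ∧ IsComp G (A x.1.1) x.1.2 := by
    intro x hx
    have := fun h => hx (hRuniq x h)
    exact ⟨this, (x.2.resolve_left (fun h => this h.1)).2⟩
  have huniq : ∀ x y : κ, x.1.1 = y.1.1 → ∀ v, v ∈ x.1.2 → v ∈ y.1.2 → x = y := by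
    intro x y hxy v hvx hvy
    by_cases hx : x = R
    · rw [hx]; refine (hRuniq y ?_).symm; rw [← hxy, hx]
    · by_cases hy : y = R
      · rw [hy]; refine hRuniq x ?_; rw [hxy, hy]
      · have cx := (hcomp x hx).2
        have cy := (hcomp y hy).2
        rw [← hxy] at cy
        exact Subtype.ext (Prod.ext hxy (Set.Subset.antisymm
          (comp_sub cy cx.1 cx.2.1 hvx hvy) (comp_sub cx cy.1 cy.2.1 hvy hvx)))
  have hpar : ∀ x : κ, ∃ y : κ, y.1.1 = p x.1.1 ∧ x.1.2 ⊆ y.1.2 := by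
    intro x
    by_cases hx : x = R
    · exact ⟨R, by rw [hx]; exact hr.symm, fun _ _ => trivial⟩
    · obtain ⟨hxr, hc⟩ := hcomp x hx
      obtain ⟨⟨v, hv⟩⟩ := hc.2.1.nonempty
      obtain ⟨y, hy1, hy2⟩ := hκ (p x.1.1) v (hA _ (hc.1 hv))
      refine ⟨y, hy1, ?_⟩
      by_cases hyR : y = R
      · rw [hyR]; exact fun _ _ => trivial
      · have cy := (hcomp y hyR).2
        rw [hy1] at cy
        exact comp_sub cy (hc.1.trans (hA _)) hc.2.1 hv hy2
  choose q hq1 hq2 using hpar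
  have hqn : ∀ n x, (q^[n] x).1.1 = p^[n] x.1.1 ∧ x.1.2 ⊆ (q^[n] x).1.2 := by
    intro n
    induction n with
    | zero => exact fun x => ⟨rfl, subset_rfl⟩
    | succ n ih =>
      intro x
      simp only [Function.iterate_succ_apply]
      refine ⟨by rw [(ih (q x)).1, hq1], (hq2 x).trans (ih (q x)).2⟩
  have hqR : q R = R := hRuniq _ (by rw [hq1]; exact hr)
  have hqreach : ∀ x, ∃ n : ℕ, q^[n] x = R := by
    intro x
    obtain ⟨n, hn⟩ := hreach x.1.1
    exact ⟨n, hRuniq _ (by rw [(hqn n x).1, hn])⟩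
  let B : κ → Set V := fun x => β x.1.1 ∩ NC G x.1.2
  -- the top node of a vertex
  have hvtop : ∀ v, ∃ x : κ, x.1.1 = τ v ∧ v ∈ x.1.2 := fun v => hκ (τ v) v (anc_refl p _)
  choose σ hσ1 hσ2 using hvtop
  have hσB : ∀ v, v ∈ B (σ v) := fun v => ⟨by rw [hσ1]; exact hτ v, Or.inl (hσ2 v)⟩
  have hσtop : ∀ v x, v ∈ B x → x = σ v ∨ (x ≠ R ∧ v ∈ B (q x)) := by
    intro v x hv
    by_cases hxR : x = R
    · left
      have hvr : v ∈ β r := by have := hv.1; rw [hxR] at this; exact this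
      rcases htop v r hvr with h | h
      · rw [hxR]; refine (hRuniq _ ?_).symm; rw [hσ1, h]
      · exact absurd rfl h.1
    obtain ⟨hxr, hc⟩ := hcomp x hxR
    rcases htop v x.1.1 hv.1 with h | h
    · left
      refine huniq x (σ v) (by rw [h, hσ1]) v ?_ (hσ2 v)
      rcases hv.2 with h' | ⟨u, hu, huv⟩
      · exact h'
      · exact hc.2.2 u hu v (show IsAncestor p x.1.1 (τ v) from h ▸ anc_refl p _) huv
    · right
      exact ⟨hxR, by rw [hq1]; exact h.2, NC_mono (hq2 x) hv.2⟩
  -- the adhesion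
  have hadh : ∀ x, x ≠ R → B x ∩ B (q x) = nbhd G x.1.2 := by
    intro x hx
    obtain ⟨hxr, hc⟩ := hcomp x hx
    ext v
    constructor
    · rintro ⟨h1, h2⟩
      have hvp : v ∈ β (p x.1.1) := by rw [← hq1]; exact h2.1
      have hvn : v ∉ x.1.2 := fun h => hAp _ hxr v (hc.1 h) hvp
      exact ⟨hvn, h1.2.resolve_left hvn⟩
    · rintro ⟨hvn, u, hu, huv⟩
      have hvA : v ∉ A x.1.1 := fun h => hvn (hc.2.2 u hu v h huv)
      obtain ⟨h1, h2⟩ := hAn _ u (hc.1 hu) v hvA huv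
      have h3 : v ∈ NC G x.1.2 := Or.inr ⟨u, hu, huv⟩
      exact ⟨⟨h1, h3⟩, by rw [hq1]; exact h2, NC_mono (hq2 x) h3⟩
  have hgamma : ∀ x, x ≠ R → alphaSet q B x = x.1.2 := by
    intro x hx
    obtain ⟨hxr, hc⟩ := hcomp x hx
    unfold alphaSet
    rw [hadh x hx]
    ext v
    constructor
    · rintro ⟨⟨y, ⟨n, hn⟩, hvy⟩, hvn⟩
      have h1 : v ∈ NC G x.1.2 := by
        have := (hqn n y).2
        rw [hn] at this
        exact NC_mono this hvy.2
      by_contra hcon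
      exact hvn ⟨hcon, h1.resolve_left hcon⟩
    · intro hv
      refine ⟨⟨σ v, ?_, hσB v⟩, fun h => h.1 hv⟩
      obtain ⟨n, hn⟩ : IsAncestor p x.1.1 (τ v) := hc.1 hv
      refine ⟨n, huniq _ _ ?_ v ((hqn n _).2 (hσ2 v)) hv⟩
      rw [(hqn n _).1, hσ1, hn]
  refine ⟨κ, Fintype.ofFinite κ, R, q, B, ⟨hqR, hqreach, fun v => ⟨σ v, hσB v⟩, ?_, ?_⟩, ?_, ?_, ?_⟩
  · intro u v huv
    obtain ⟨t, hut, hvt⟩ := hdec.adj_bag u v huv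
    have hstep : ∀ a b t, a ∈ β t → b ∈ β t → G.Adj a b → t = τ a → ∃ x, a ∈ B x ∧ b ∈ B x := by
      intro a b t ha hb hab hta
      exact ⟨σ a, hσB a, by rw [hσ1, ← hta]; exact hb, Or.inr ⟨a, hσ2 a, hab⟩⟩
    obtain ⟨n, hn⟩ := hreach t
    induction n generalizing t with
    | zero =>
      rcases htop u t hut with h | h
      · exact hstep u v t hut hvt huv h
      · exact absurd hn h.1
    | succ n ih =>
      rcases htop u t hut with h | h
      · exact hstep u v t hut hvt huv h
      · rcases htop v t hvt with h' | h'
        · obtain ⟨x, h1, h2⟩ := hstep v u t hvt hut huv.symm h'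
          exact ⟨x, h2, h1⟩
        · exact ih (p t) h.2 h'.2 hn
  · intro v x y s hx hy hs
    obtain ⟨ha, hb⟩ := conn_of_top hqR hqreach (hσtop v)
    have h1 := hs.2 _ (ha x hx) (ha y hy)
    rcases hs.1 with h | h
    · exact hb x s hx h h1
    · exact hb y s hy h h1
  · intro x hx
    rw [hgamma x hx, hadh x hx]
    exact ⟨(hcomp x hx).2.2.1, rfl⟩
  · exact fun x => ⟨x.1.1, Set.inter_subset_left⟩
  · intro x hx
    refine ⟨x.1.1, p x.1.1, hTadj _ (hcomp x hx).1, ?_⟩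
    rintro v ⟨h1, h2⟩
    refine ⟨h1.1, ?_⟩
    rw [← hq1]; exact h2.1
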